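/- For every real β with 0 < β < 1, every real η with 0 < η < 1, and every m ∈ ℕ, there exist natural numbers n and N with m ≤ n < N such that the following holds: for every probability mass function P on binary strings of length N (i.e., P : (Fin N → Bool) → nonnegative reals with ∑ P = 1), there exist finite sets A_n, A_{n+1}, …, A_N of binary strings such that (1) for each i with n ≤ i ≤ N, every element of A_i has length i and the cardinality of A_i is at most 2^{β·i}; and (2) the P-probability of the set of strings of length N having some contiguous substring belonging to A_n ∪ … ∪ A_N is at least 1 − η. -/

import Mathlib

/-!
Call a string *rich* at level `i`, with respect to a finite set `T` of strings of length `i`, if it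
contains more than a fraction `C * 2 ^ (-β * i)` of the elements of `T`. Greedily picking
`2 ^ (β * i)` elements of `T` hits, for any weights, all but a fraction `exp (-C / 2)` of the rich
strings, so it suffices to make every string rich at some level. A product of sufficiently many
blocks from a set `S` of `2 ^ (γ * ℓ)` strings of length `ℓ` is either rich with respect to `S`, or
each of its runs of `p` consecutive blocks contains at most `2 ^ (κ * ℓ)` elements of `S`, for some
`κ > γ - β`. For `p` large there are at most `2 ^ (γ' * ℓ * p)` such runs whenever `γ' > κ`, so
passing from `S` to the set of these runs lowers the exponent `γ` by almost `β`. After finitely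
many passages the exponent is negative and no string is left.

Strings enter only through products and their length only through membership in `X ^ i`, so the
argument takes place in an arbitrary monoid with a finite subset `X` as the alphabet.
-/

open Filter Finset
open scoped Pointwise

section HittingSets

variable {ι α : Type*} {R : ι → α → Prop} [DecidableRel R] {S : Finset α} {Ω : Finset ι}
  {w : ι → ℝ} {r : ℝ}

theorem exists_mul_sum_le_sum_filter (hS : S.Nonempty) (hw : ∀ ω ∈ Ω, 0 ≤ w ω)
    (hR : ∀ ω ∈ Ω, r * #S ≤ #{s ∈ S | R ω s}) :
    ∃ s ∈ S, r * ∑ ω ∈ Ω, w ω ≤ ∑ ω ∈ Ω with R ω s, w ω := by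
  refine exists_le_of_sum_le hS ?_
  calc ∑ _s ∈ S, r * ∑ ω ∈ Ω, w ω = ∑ ω ∈ Ω, r * #S * w ω := by
        rw [sum_const, nsmul_eq_mul, mul_sum, mul_sum]
        exact sum_congr rfl fun ω _ => by ring
    _ ≤ ∑ ω ∈ Ω, #{s ∈ S | R ω s} * w ω :=
        sum_le_sum fun ω hω => mul_le_mul_of_nonneg_right (hR ω hω) (hw ω hω)
    _ = ∑ ω ∈ Ω, ∑ s ∈ S with R ω s, w ω := by simp only [sum_const, nsmul_eq_mul]
    _ = ∑ s ∈ S, ∑ ω ∈ Ω with R ω s, w ω := by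
        simp only [sum_filter]
        exact sum_comm

theorem exists_subset_card_le_sum_filter_le_exp (hS : S.Nonempty) (hw : ∀ ω ∈ Ω, 0 ≤ w ω)
    (hR : ∀ ω ∈ Ω, r * #S ≤ #{s ∈ S | R ω s}) (k : ℕ) :
    ∃ A ⊆ S, #A ≤ k ∧
      ∑ ω ∈ Ω with ∀ s ∈ A, ¬ R ω s, w ω ≤ Real.exp (-(r * k)) * ∑ ω ∈ Ω, w ω := by
  classical
  induction k with
  | zero => exact ⟨∅, by simp⟩
  | succ k ih =>
    obtain ⟨A, hAS, hAk, hA⟩ := ih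
    set T := {ω ∈ Ω | ∀ s ∈ A, ¬ R ω s}
    have hTΩ : T ⊆ Ω := filter_subset _ _
    have hT : 0 ≤ ∑ ω ∈ T, w ω := sum_nonneg fun ω hω => hw ω (hTΩ hω)
    obtain ⟨s, hsS, hs⟩ := exists_mul_sum_le_sum_filter hS (fun ω hω => hw ω (hTΩ hω))
      (fun ω hω => hR ω (hTΩ hω))
    refine ⟨insert s A, insert_subset hsS hAS, (card_insert_le s A).trans (by lia), ?_⟩
    have hmissed : {ω ∈ Ω | ∀ t ∈ insert s A, ¬ R ω t} = {ω ∈ T | ¬ R ω s} := by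
      simp only [T, filter_filter, forall_mem_insert, and_comm]
    calc ∑ ω ∈ Ω with ∀ t ∈ insert s A, ¬ R ω t, w ω
        = ∑ ω ∈ T, w ω - ∑ ω ∈ T with R ω s, w ω := by
          rw [hmissed, ← sum_filter_add_sum_filter_not T (R · s) w, add_sub_cancel_left]
      _ ≤ (-r + 1) * ∑ ω ∈ T, w ω := by linarith
      _ ≤ Real.exp (-r) * (Real.exp (-(r * k)) * ∑ ω ∈ Ω, w ω) :=
          mul_le_mul (Real.add_one_le_exp _) hA hT (Real.exp_nonneg _)
      _ = Real.exp (-(r * (k + 1 : ℕ))) * ∑ ω ∈ Ω, w ω := by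
          rw [← mul_assoc, ← Real.exp_add]
          push_cast
          ring_nf

end HittingSets

theorem eventually_mul_two_rpow_le (C : ℝ) {γ δ : ℝ} (h : γ < δ) :
    ∀ᶠ ℓ : ℕ in atTop, C * (2 : ℝ) ^ (γ * ℓ) ≤ (2 : ℝ) ^ (δ * ℓ) := by
  have htop : Tendsto (fun ℓ : ℕ => ((2 : ℝ) ^ (δ - γ)) ^ ℓ) atTop atTop :=
    tendsto_pow_atTop_atTop_of_one_lt (Real.one_lt_rpow one_lt_two (sub_pos.2 h))
  filter_upwards [htop.eventually_ge_atTop C] with ℓ hℓ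
  calc C * (2 : ℝ) ^ (γ * ℓ) ≤ ((2 : ℝ) ^ (δ - γ)) ^ ℓ * (2 : ℝ) ^ (γ * ℓ) := by gcongr
    _ = (2 : ℝ) ^ (δ * ℓ) := by
        rw [← Real.rpow_mul_natCast two_pos.le, ← Real.rpow_add two_pos]
        ring_nf

section Factors

variable {M : Type*} [Monoid M]

/-- `y` is a factor of `x` in the sense of combinatorics on words: in the free monoid, a contiguous
substring. -/
def IsFactor (y x : M) : Prop :=
  ∃ l r, l * y * r = x

noncomputable instance : DecidableRel (IsFactor (M := M)) := Classical.decRel _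

theorem IsFactor.mul_right {y x : M} (h : IsFactor y x) (z : M) : IsFactor y (x * z) := by
  obtain ⟨l, r, rfl⟩ := h
  exact ⟨l, r * z, by simp only [mul_assoc]⟩

theorem IsFactor.mul_left {y x : M} (h : IsFactor y x) (z : M) : IsFactor y (z * x) := by
  obtain ⟨l, r, rfl⟩ := h
  exact ⟨z * l, r, by simp only [mul_assoc]⟩

theorem isFactor_mul_left_self (y z : M) : IsFactor y (z * y) :=
  ⟨z, 1, mul_one _⟩

/-- The elements of `S` that are factors of `x`. -/
noncomputable def factorsIn (S : Finset M) (x : M) : Finset M :=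
  {y ∈ S | IsFactor y x}

theorem factorsIn_subset (S : Finset M) (x : M) : factorsIn S x ⊆ S :=
  filter_subset _ _

theorem factorsIn_subset_factorsIn_mul_right (S : Finset M) (x z : M) :
    factorsIn S x ⊆ factorsIn S (x * z) :=
  monotone_filter_right S fun _ _ h => h.mul_right z

theorem factorsIn_subset_factorsIn_mul_left (S : Finset M) (x z : M) :
    factorsIn S x ⊆ factorsIn S (z * x) :=
  monotone_filter_right S fun _ _ h => h.mul_left z

variable [DecidableEq M]

theorem mem_factorsIn_pow {S : Finset M} {p : ℕ} {x : M} (hx : x ∈ S ^ p) :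
    x ∈ factorsIn S x ^ p := by
  induction p generalizing x with
  | zero => simpa using hx
  | succ p ih =>
    rw [pow_succ] at hx ⊢
    obtain ⟨a, ha, b, hb, rfl⟩ := mem_mul.1 hx
    exact mul_mem_mul (pow_subset_pow_left (factorsIn_subset_factorsIn_mul_right S a b) (ih ha))
      (mem_filter.2 ⟨hb, isFactor_mul_left_self b a⟩)

/-- The products of `p` elements of `S` having at most `K` factors in `S`. -/
noncomputable def poorPow (S : Finset M) (K p : ℕ) : Finset M :=
  {x ∈ S ^ p | #(factorsIn S x) ≤ K}

theorem poorPow_subset (S : Finset M) (K p : ℕ) : poorPow S K p ⊆ S ^ p :=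
  filter_subset _ _

theorem card_poorPow_le (S : Finset M) (K p : ℕ) : #(poorPow S K p) ≤ 2 ^ #S * K ^ p := by
  have hcover : poorPow S K p ⊆ {T ∈ S.powerset | #T ≤ K}.biUnion (· ^ p) := fun x hx => by
    obtain ⟨hxS, hxK⟩ := mem_filter.1 hx
    exact mem_biUnion.2 ⟨factorsIn S x,
      mem_filter.2 ⟨mem_powerset.2 (factorsIn_subset S x), hxK⟩, mem_factorsIn_pow hxS⟩
  calc #(poorPow S K p) ≤ #{T ∈ S.powerset | #T ≤ K} * K ^ p :=
        (card_le_card hcover).trans <| card_biUnion_le_card_mul _ _ _ fun T hT =>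
          card_pow_le.trans (Nat.pow_le_pow_left (mem_filter.1 hT).2 p)
    _ ≤ 2 ^ #S * K ^ p := by
        gcongr
        exact (card_filter_le _ _).trans_eq (card_powerset S)

theorem mem_poorPow_pow_or_lt_card_factorsIn {S : Finset M} {p q : ℕ} {x : M} (K : ℕ)
    (hx : x ∈ S ^ (p * q)) : x ∈ poorPow S K p ^ q ∨ K < #(factorsIn S x) := by
  induction q generalizing x with
  | zero => exact .inl (by simpa using hx)
  | succ q ih =>
    rw [mul_add_one, pow_add] at hx
    obtain ⟨a, ha, b, hb, rfl⟩ := mem_mul.1 hx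
    rcases ih ha with ha | ha
    · rcases le_or_gt #(factorsIn S b) K with hbK | hbK
      · rw [pow_succ]
        exact .inl (mul_mem_mul ha (mem_filter.2 ⟨hb, hbK⟩))
      · exact .inr (hbK.trans_le (card_le_card (factorsIn_subset_factorsIn_mul_left S b a)))
    · exact .inr (ha.trans_le (card_le_card (factorsIn_subset_factorsIn_mul_right S a b)))

theorem card_poorPow_le_two_rpow {S : Finset M} {K ℓ p : ℕ} {γ κ : ℝ}
    (hK : (K : ℝ) ≤ 2 ^ (κ * ℓ)) (hp : #S ≤ (γ - κ) * ℓ * p) :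
    (#(poorPow S K p) : ℝ) ≤ 2 ^ (γ * (ℓ * p : ℕ)) :=
  calc (#(poorPow S K p) : ℝ) ≤ 2 ^ #S * (K : ℝ) ^ p := mod_cast card_poorPow_le S K p
    _ ≤ 2 ^ #S * ((2 : ℝ) ^ (κ * ℓ)) ^ p := by gcongr
    _ = 2 ^ (#S + κ * ℓ * p) := by
        rw [← Real.rpow_mul_natCast two_pos.le, Real.rpow_add two_pos, Real.rpow_natCast]
    _ ≤ 2 ^ (γ * (ℓ * p : ℕ)) := by
        refine Real.rpow_le_rpow_of_exponent_le one_le_two ?_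
        push_cast
        linarith

end Factors

section Rich

variable {M : Type*} [Monoid M]

/-- `x` contains a fraction of the elements of `T`, thought of as strings of length `i`, that is
larger than `C * 2 ^ (-β * i)`. The strict inequality forces `T` to be nonempty. -/
def IsRich (β C : ℝ) (i : ℕ) (T : Finset M) (x : M) : Prop :=
  C * #T < 2 ^ (β * i) * #(factorsIn T x)

variable {β C : ℝ}

theorem IsRich.nonempty {i : ℕ} {T : Finset M} {x : M} (h : IsRich β C i T x) : T.Nonempty := by
  rw [nonempty_iff_ne_empty]
  rintro rfl
  simp [IsRich, factorsIn] at h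

theorem isRich_of_floor_lt_card {γ κ : ℝ} {ℓ : ℕ} {S : Finset M} {x : M} (hC : 0 ≤ C)
    (hℓ : C * (2 : ℝ) ^ (γ * ℓ) ≤ 2 ^ ((β + κ) * ℓ)) (hS : (#S : ℝ) ≤ 2 ^ (γ * ℓ))
    (hx : ⌊(2 : ℝ) ^ (κ * ℓ)⌋₊ < #(factorsIn S x)) : IsRich β C ℓ S x :=
  calc C * #S ≤ C * (2 : ℝ) ^ (γ * ℓ) := by gcongr
    _ ≤ 2 ^ (β * ℓ) * 2 ^ (κ * ℓ) := by rwa [← Real.rpow_add two_pos, ← add_mul]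
    _ < 2 ^ (β * ℓ) * #(factorsIn S x) := by
        gcongr
        exact Nat.lt_of_floor_lt hx

section Hitting

variable {ι : Type*} {Ω : Finset ι} {x : ι → M} {w : ι → ℝ}

theorem exists_hitting_set_of_isRich (hβ : 0 ≤ β) (hC : 0 ≤ C) {i : ℕ} {T : Finset M}
    (hw : ∀ ω ∈ Ω, 0 ≤ w ω) (hx : ∀ ω ∈ Ω, IsRich β C i T (x ω)) :
    ∃ A ⊆ T, (#A : ℝ) ≤ 2 ^ (β * i) ∧
      ∑ ω ∈ Ω with ∀ y ∈ A, ¬ IsFactor y (x ω), w ω ≤ Real.exp (-(C / 2)) * ∑ ω ∈ Ω, w ω := by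
  rcases Ω.eq_empty_or_nonempty with rfl | ⟨ω₀, hω₀⟩
  · exact ⟨∅, empty_subset T, by simpa using Real.rpow_nonneg two_pos.le _, by simp⟩
  set t : ℝ := 2 ^ (β * i)
  have ht : 0 < t := by positivity
  obtain ⟨A, hAT, hAt, hA⟩ := exists_subset_card_le_sum_filter_le_exp
    (R := fun ω y => IsFactor y (x ω)) (r := C / t) (hx ω₀ hω₀).nonempty hw
    (fun ω hω => by
      rw [div_mul_eq_mul_div, div_le_iff₀' ht]
      exact (hx ω hω).le) ⌊t⌋₊
  refine ⟨A, hAT, (Nat.le_floor_iff ht.le).1 hAt, hA.trans ?_⟩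
  have hfloor : t / 2 ≤ ⌊t⌋₊ :=
    (Nat.div_two_lt_floor (Real.one_le_rpow one_le_two (by positivity))).le
  have hexponent : C / 2 ≤ C / t * ⌊t⌋₊ := by
    calc C / 2 = C / t * (t / 2) := by field_simp
      _ ≤ C / t * ⌊t⌋₊ := by gcongr
  have hΩ : 0 ≤ ∑ ω ∈ Ω, w ω := sum_nonneg hw
  gcongr

theorem exists_hitting_family_of_isRich (hβ : 0 ≤ β) (hC : 0 ≤ C) {I : Finset ℕ}
    {L : ℕ → Finset M} (hw : ∀ ω ∈ Ω, 0 ≤ w ω) (hx : ∀ ω ∈ Ω, ∃ i ∈ I, IsRich β C i (L i) (x ω)) :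
    ∃ A : ℕ → Finset M, (∀ i, A i ⊆ L i ∧ (#(A i) : ℝ) ≤ 2 ^ (β * i)) ∧
      ∑ ω ∈ Ω with ∀ i ∈ I, ∀ y ∈ A i, ¬ IsFactor y (x ω), w ω ≤
        Real.exp (-(C / 2)) * ∑ ω ∈ Ω, w ω := by
  choose! level hlevelI hrich using hx
  have hlevel (i : ℕ) : ∃ A ⊆ L i, (#A : ℝ) ≤ 2 ^ (β * i) ∧
      ∑ ω ∈ {ω ∈ Ω | level ω = i} with ∀ y ∈ A, ¬ IsFactor y (x ω), w ω ≤
        Real.exp (-(C / 2)) * ∑ ω ∈ Ω with level ω = i, w ω := by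
    refine exists_hitting_set_of_isRich hβ hC (fun ω hω => hw ω (mem_filter.1 hω).1) fun ω hω => ?_
    obtain ⟨hωΩ, rfl⟩ := mem_filter.1 hω
    exact hrich ω hωΩ
  choose A hAL hAcard hA using hlevel
  refine ⟨A, fun i => ⟨hAL i, hAcard i⟩, ?_⟩
  set missed := {ω ∈ Ω | ∀ i ∈ I, ∀ y ∈ A i, ¬ IsFactor y (x ω)}
  calc ∑ ω ∈ missed, w ω = ∑ i ∈ I, ∑ ω ∈ missed with level ω = i, w ω :=
        (sum_fiberwise_of_maps_to (fun ω hω => hlevelI ω (mem_filter.1 hω).1) w).symm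
    _ ≤ ∑ i ∈ I, ∑ ω ∈ {ω ∈ Ω | level ω = i} with ∀ y ∈ A i, ¬ IsFactor y (x ω), w ω := by
        refine sum_le_sum fun i hi => sum_le_sum_of_subset_of_nonneg (fun ω hω => ?_)
          fun ω hω _ => hw ω (mem_filter.1 (mem_filter.1 hω).1).1
        simp only [missed, mem_filter] at hω ⊢
        exact ⟨⟨hω.1.1, hω.2⟩, hω.1.2 i hi⟩
    _ ≤ ∑ i ∈ I, Real.exp (-(C / 2)) * ∑ ω ∈ Ω with level ω = i, w ω := sum_le_sum fun i _ => hA i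
    _ = Real.exp (-(C / 2)) * ∑ ω ∈ Ω, w ω := by
        rw [← mul_sum, sum_fiberwise_of_maps_to hlevelI]

end Hitting

variable [DecidableEq M] {X : Finset M} {γ : ℝ}

/-- Whenever `ℓ` is large and `S` consists of at most `2 ^ (γ * ℓ)` strings of length `ℓ` over the
alphabet `X`, there are `q` and sets `L i` of strings of length `i` such that every product of `q`
elements of `S` is rich with respect to some `L i`. -/
def HasRichLevels (X : Finset M) (β C γ : ℝ) : Prop :=
  ∀ᶠ ℓ : ℕ in atTop, ∀ S ⊆ X ^ ℓ, (#S : ℝ) ≤ 2 ^ (γ * ℓ) →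
    ∃ q > 1, ∃ L : ℕ → Finset M, (∀ i, L i ⊆ X ^ i) ∧
      ∀ x ∈ S ^ q, ∃ i ∈ Icc ℓ (ℓ * q), IsRich β C i (L i) x

theorem hasRichLevels_of_neg (X : Finset M) (β C : ℝ) (hγ : γ < 0) : HasRichLevels X β C γ := by
  filter_upwards [eventually_gt_atTop 0] with ℓ hℓ S _ hScard
  have hS : S = ∅ := by
    have hlt : (#S : ℝ) < 1 := hScard.trans_lt <|
      Real.rpow_lt_one_of_one_lt_of_neg one_lt_two (mul_neg_of_neg_of_pos hγ (mod_cast hℓ))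
    exact card_eq_zero.1 (Nat.lt_one_iff.1 (mod_cast hlt))
  exact ⟨2, one_lt_two, fun _ => ∅, by simp [hS]⟩

theorem HasRichLevels.of_lt_add {γ' : ℝ} (hC : 0 ≤ C) (h : HasRichLevels X β C γ')
    (hγ : γ < γ' + β) : HasRichLevels X β C γ := by
  obtain ⟨κ, hγκ, hκγ'⟩ := exists_between (sub_lt_iff_lt_add.2 hγ)
  filter_upwards [eventually_mul_two_rpow_le C (sub_lt_iff_lt_add'.1 hγκ), eventually_gt_atTop 0]
    with ℓ hℓ hℓ0 S hSX hScard
  set K := ⌊(2 : ℝ) ^ (κ * ℓ)⌋₊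
  have hslope : 0 < (γ' - κ) * ℓ := mul_pos (sub_pos.2 hκγ') (mod_cast hℓ0)
  obtain ⟨p, hp, hpS, hlevels⟩ := ((eventually_gt_atTop 1).and <|
    ((tendsto_natCast_atTop_atTop.const_mul_atTop' hslope).eventually_ge_atTop (#S : ℝ)).and <|
      (tendsto_id.const_mul_atTop' hℓ0).eventually h).exists
  obtain ⟨q, hq, L, hLX, hL⟩ := hlevels (poorPow S K p)
    (pow_mul X ℓ p ▸ (poorPow_subset S K p).trans (pow_subset_pow_left hSX))
    (card_poorPow_le_two_rpow (Nat.floor_le (by positivity)) hpS)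
  refine ⟨p * q, one_lt_mul hp.le hq, Function.update L ℓ S,
    (Function.forall_update_iff L fun i T => T ⊆ X ^ i).2 ⟨hSX, fun i _ => hLX i⟩, fun x hx => ?_⟩
  rcases mem_poorPow_pow_or_lt_card_factorsIn K hx with hpoor | hmany
  · obtain ⟨i, hi, hrich⟩ := hL x hpoor
    obtain ⟨hℓi, hiq⟩ := mem_Icc.1 hi
    have hlt : ℓ < i := (lt_mul_of_one_lt_right hℓ0 hp).trans_le hℓi
    exact ⟨i, mem_Icc.2 ⟨hlt.le, by rwa [← mul_assoc]⟩, by rwa [Function.update_of_ne hlt.ne']⟩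
  · refine ⟨ℓ, mem_Icc.2 ⟨le_rfl, Nat.le_mul_of_pos_right ℓ (by positivity)⟩, ?_⟩
    rw [Function.update_self]
    exact isRich_of_floor_lt_card hC hℓ hScard hmany

theorem hasRichLevels (X : Finset M) (hβ : 0 < β) (hC : 0 ≤ C) (γ : ℝ) :
    HasRichLevels X β C γ := by
  have hlt_mul (k : ℕ) : ∀ γ < k * β, HasRichLevels X β C γ := by
    induction k with
    | zero => exact fun γ hγ => hasRichLevels_of_neg X β C (by simpa using hγ)
    | succ k ih =>
      intro γ hγ
      obtain ⟨γ', hγγ', hγ'⟩ := exists_between (show γ - β < k * β by push_cast at hγ; linarith)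
      exact (ih γ' hγ').of_lt_add hC (sub_lt_iff_lt_add.1 hγγ')
  obtain ⟨k, hk⟩ := exists_lt_nsmul hβ γ
  exact hlt_mul k γ (by rwa [← nsmul_eq_mul])

theorem exists_hitting_family_of_mem_pow (X : Finset M) {η : ℝ} (hβ : 0 < β) (hη : 0 < η) (m : ℕ) :
    ∃ n N : ℕ, m ≤ n ∧ n < N ∧ ∀ {ι : Type*} {Ω : Finset ι} {x : ι → M} {w : ι → ℝ},
      (∀ ω ∈ Ω, x ω ∈ X ^ N) → (∀ ω ∈ Ω, 0 ≤ w ω) →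
        ∃ A : ℕ → Finset M, (∀ i, A i ⊆ X ^ i ∧ (#(A i) : ℝ) ≤ 2 ^ (β * i)) ∧
          ∑ ω ∈ Ω with ∀ i ∈ Icc n N, ∀ y ∈ A i, ¬ IsFactor y (x ω), w ω ≤ η * ∑ ω ∈ Ω, w ω := by
  set C : ℝ := 2 * |Real.log η|
  have hC : 0 ≤ C := by positivity
  have hexp : Real.exp (-(C / 2)) ≤ η := by
    rw [← Real.le_log_iff_exp_le hη, mul_div_cancel_left₀ _ two_ne_zero]
    exact neg_abs_le _
  obtain ⟨n, hlevels, hn, hm⟩ := ((hasRichLevels X hβ hC #X).and <|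
    (eventually_gt_atTop 0).and (eventually_ge_atTop m)).exists
  have hcard : (#(X ^ n) : ℝ) ≤ 2 ^ (#X * n : ℝ) := by
    rw [Real.rpow_mul_natCast two_pos.le, Real.rpow_natCast]
    exact_mod_cast card_pow_le.trans (Nat.pow_le_pow_left Nat.lt_two_pow_self.le n)
  obtain ⟨q, hq, L, hLX, hL⟩ := hlevels (X ^ n) subset_rfl hcard
  refine ⟨n, n * q, hm, lt_mul_of_one_lt_right hn hq, fun hx hw => ?_⟩
  obtain ⟨A, hA, hmiss⟩ := exists_hitting_family_of_isRich hβ.le hC hw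
    fun ω hω => hL _ (pow_mul X n q ▸ hx ω hω)
  exact ⟨A, fun i => ⟨(hA i).1.trans (hLX i), (hA i).2⟩,
    hmiss.trans (mul_le_mul_of_nonneg_right hexp (sum_nonneg hw))⟩

end Rich

theorem isFactor_ofList_iff {α : Type*} {y : FreeMonoid α} {l : List α} :
    IsFactor y (FreeMonoid.ofList l) ↔ y.toList <:+: l :=
  Iff.rfl

theorem mem_univ_image_of_pow_iff {α : Type*} [Fintype α] [DecidableEq (FreeMonoid α)] {n : ℕ}
    {x : FreeMonoid α} : x ∈ univ.image (FreeMonoid.of (α := α)) ^ n ↔ x.length = n := by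
  induction n generalizing x with
  | zero => simp
  | succ n ih =>
    rw [pow_succ', Finset.mem_mul]
    constructor
    · rintro ⟨a, ha, y, hy, rfl⟩
      obtain ⟨a, -, rfl⟩ := mem_image.1 ha
      rw [FreeMonoid.length_mul, FreeMonoid.length_of, ih.1 hy, add_comm]
    · intro hx
      cases x using FreeMonoid.casesOn with
      | one => simp at hx
      | of_mul a y =>
        rw [FreeMonoid.length_mul, FreeMonoid.length_of, add_comm] at hx
        exact ⟨_, mem_image_of_mem _ (mem_univ a), y, ih.2 (Nat.succ_injective hx), rfl⟩

open scoped Classical in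
theorem rumyantsev_lemma_general {α : Type*} [Fintype α] {β η : ℝ} (hβ : 0 < β) (hη : 0 < η)
    (m : ℕ) :
    ∃ n N : ℕ, m ≤ n ∧ n < N ∧
      ∀ P : (Fin N → α) → NNReal, (∑ σ : Fin N → α, P σ) = 1 →
        ∃ A : ℕ → Finset (List α),
          (∀ i : ℕ, n ≤ i → i ≤ N →
            (∀ τ ∈ A i, τ.length = i) ∧ ((A i).card : ℝ) ≤ (2 : ℝ) ^ (β * i)) ∧
          1 - η ≤ ((∑ σ ∈ Finset.univ.filter
              (fun σ : Fin N → α => ∃ i, n ≤ i ∧ i ≤ N ∧ ∃ τ ∈ A i, τ <:+: List.ofFn σ),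
              P σ : NNReal) : ℝ) := by
  obtain ⟨n, N, hm, hN, h⟩ :=
    exists_hitting_family_of_mem_pow (univ.image (FreeMonoid.of (α := α))) hβ hη m
  refine ⟨n, N, hm, hN, fun P hP => ?_⟩
  obtain ⟨A, hA, hmiss⟩ := h (Ω := univ) (x := fun σ : Fin N → α => FreeMonoid.ofList (List.ofFn σ))
    (w := fun σ => P σ) (fun σ _ => mem_univ_image_of_pow_iff.2 List.length_ofFn)
    fun σ _ => (P σ).coe_nonneg
  refine ⟨fun i => (A i).map FreeMonoid.toList.toEmbedding, fun i _ _ => ⟨fun τ hτ => ?_, ?_⟩, ?_⟩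
  · obtain ⟨y, hy, rfl⟩ := mem_map.1 hτ
    exact mem_univ_image_of_pow_iff.1 ((hA i).1 hy)
  · rw [card_map]
    exact (hA i).2
  · have hP' : ∑ σ, (P σ : ℝ) = 1 := mod_cast hP
    rw [hP', mul_one] at hmiss
    rw [NNReal.coe_sum, sub_le_comm, ← hP']
    refine (sub_eq_of_eq_add' (sum_filter_add_sum_filter_not univ _ _).symm).trans_le ?_
    refine (sum_congr (filter_congr fun σ _ => ?_) fun _ _ => rfl).trans_le hmiss
    simp [isFactor_ofList_iff, FreeMonoid.ofList.forall_congr_left]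

open scoped Classical in
theorem rumyantsev_lemma
    (β η : ℝ) (hβ : 0 < β ∧ β < 1) (hη : 0 < η ∧ η < 1) (m : ℕ) :
    ∃ n N : ℕ, m ≤ n ∧ n < N ∧
      ∀ P : (Fin N → Bool) → NNReal, (∑ σ : Fin N → Bool, P σ) = 1 →
        ∃ A : ℕ → Finset (List Bool),
          (∀ i : ℕ, n ≤ i → i ≤ N →
            (∀ τ ∈ A i, τ.length = i) ∧ ((A i).card : ℝ) ≤ (2 : ℝ) ^ (β * i)) ∧
          1 - η ≤ ((∑ σ ∈ Finset.univ.filter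
              (fun σ : Fin N → Bool => ∃ i, n ≤ i ∧ i ≤ N ∧ ∃ τ ∈ A i, τ <:+: List.ofFn σ),
              P σ : NNReal) : ℝ) :=
  rumyantsev_lemma_general hβ.1 hη.1 m
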